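/- arXiv:1509.09129 — 2 statements merged into one kernel-verified Lean document; each statement's English description precedes it below -/
import Mathlib

section
/- Let α, β ∈ (0,1), M > 0. Let υ_α be the (1−α)-quantile of the chi-squared distribution with d degrees of freedom, X̄ₙ = (1/n)·Σ_{i=1}^n X_i, and Ψ₁ = 1{‖√n·X̄ₙ‖² > υ_α}. Then Ψ₁ is a test of level α: P₀(Ψ₁ = 1) ≤ α. Moreover, there exists a positive constant C(α,β,M) depending only on α, β, M such that for every ρ ≥ C(α,β,M)·d^{1/4}/√n and every f = f(ε,μ) ∈ F₂[M] with ε‖μ‖ ≥ ρ, one has P_f(Ψ₁ = 0) ≤ β. -/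
open MeasureTheory Real

noncomputable section

/-- Density of the standard Gaussian distribution `N_d(0_d, I_d)` on `ℝ^d`. -/
def gaussDensity (d : ℕ) (x : EuclideanSpace ℝ (Fin d)) : ℝ :=
  (2 * π) ^ (-(d : ℝ) / 2) * Real.exp (-‖x‖ ^ 2 / 2)

/-- The standard Gaussian measure on `ℝ^d`. -/
def gaussMeasure (d : ℕ) : Measure (EuclideanSpace ℝ (Fin d)) :=
  volume.withDensity fun x => ENNReal.ofReal (gaussDensity d x)

/-- The two-component Gaussian mixture measure with parameters `(ε, μ)`. -/
def mixMeasure (d : ℕ) (ε : ℝ) (μ : EuclideanSpace ℝ (Fin d)) :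
    Measure (EuclideanSpace ℝ (Fin d)) :=
  volume.withDensity fun x =>
    ENNReal.ofReal ((1 - ε) * gaussDensity d x + ε * gaussDensity d (x - μ))

/-- The law of the i.i.d. `n`-sample with common density the null `φ_d`. -/
def nullLaw (d n : ℕ) : Measure (Fin n → EuclideanSpace ℝ (Fin d)) :=
  Measure.pi fun _ : Fin n => gaussMeasure d

/-- The law of the i.i.d. `n`-sample with common density `f_{(ε,μ)}`. -/
def mixLaw (d n : ℕ) (ε : ℝ) (μ : EuclideanSpace ℝ (Fin d)) :
    Measure (Fin n → EuclideanSpace ℝ (Fin d)) :=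
  Measure.pi fun _ : Fin n => mixMeasure d ε μ

/-- The test statistic `‖√n · X̄ₙ‖²` where `X̄ₙ = (1/n)·Σᵢ Xᵢ`. -/
def chiStat (d n : ℕ) (X : Fin n → EuclideanSpace ℝ (Fin d)) : ℝ :=
  ‖Real.sqrt n • ((n : ℝ)⁻¹ • ∑ i, X i)‖ ^ 2

/-- The `(1-α)`-quantile `υ_α` of the chi-squared distribution with `d` degrees of
freedom, i.e. `inf {t | P(T > t) ≤ α}` for `T = ‖√n·X̄ₙ‖²` which has the chi-squared
distribution with `d` degrees of freedom under the null. -/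
def upsilon (d n : ℕ) (α : ℝ) : ℝ :=
  sInf {t : ℝ | nullLaw d n {X | t < chiStat d n X} ≤ ENNReal.ofReal α}

open ProbabilityTheory

lemma gaussDensity_nonneg (d : ℕ) (x : EuclideanSpace ℝ (Fin d)) : 0 ≤ gaussDensity d x := by
  unfold gaussDensity
  positivity

lemma continuous_gaussDensity (d : ℕ) : Continuous (gaussDensity d) := by
  unfold gaussDensity
  fun_prop

lemma integrable_gaussDensity (d : ℕ) : Integrable (gaussDensity d) := by
  have h := GaussianFourier.integrable_cexp_neg_mul_sq_norm_add
    (V := EuclideanSpace ℝ (Fin d)) (b := 1 / 2) (by norm_num) 0 0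
  refine (h.norm.const_mul ((2 * π) ^ (-(d : ℝ) / 2))).congr (ae_of_all _ fun x => ?_)
  simp only [gaussDensity, Complex.norm_exp]
  congr 2
  have hre : -(1 / 2) * (‖x‖ : ℂ) ^ 2 + 0 * (inner ℝ 0 x : ℝ) =
      ((-‖x‖ ^ 2 / 2 : ℝ) : ℂ) := by
    push_cast
    ring
  rw [hre, Complex.ofReal_re]

instance isFiniteMeasure_gaussMeasure (d : ℕ) : IsFiniteMeasure (gaussMeasure d) :=
  isFiniteMeasure_withDensity_ofReal (integrable_gaussDensity d).2

lemma gaussMeasure_eq_stdGaussian (d : ℕ) :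
    gaussMeasure d = stdGaussian (EuclideanSpace ℝ (Fin d)) := by
  refine Measure.ext_of_charFun (funext fun t => ?_)
  rw [charFun_stdGaussian, charFun_apply, gaussMeasure,
    integral_withDensity_eq_integral_toReal_smul
      (continuous_gaussDensity d).measurable.ennreal_ofReal (ae_of_all _ fun _ => by simp)]
  have h := GaussianFourier.integral_cexp_neg_mul_sq_norm_add_of_euclideanSpace
    (b := 1 / 2) (by norm_num) Complex.I t
  have hint : ∀ x : EuclideanSpace ℝ (Fin d),
      (ENNReal.ofReal (gaussDensity d x)).toReal • Complex.exp (inner ℝ x t * Complex.I) =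
        (((2 * π) ^ (-(d : ℝ) / 2) : ℝ) : ℂ) *
          Complex.exp (-(1 / 2) * ‖x‖ ^ 2 + Complex.I * inner ℝ t x) := by
    intro x
    rw [ENNReal.toReal_ofReal (gaussDensity_nonneg d x), gaussDensity, Complex.real_smul,
      Complex.ofReal_mul, mul_assoc, Complex.ofReal_exp, ← Complex.exp_add, real_inner_comm]
    congr 2
    push_cast
    ring
  simp_rw [hint]
  rw [integral_const_mul, h, ← mul_assoc]
  have hc : (((2 * π) ^ (-(d : ℝ) / 2) : ℝ) : ℂ) *
      (π / (1 / 2)) ^ ((Fintype.card (Fin d) : ℂ) / 2) = 1 := by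
    have h2 : ((π : ℂ) / (1 / 2)) = ((2 * π : ℝ) : ℂ) := by push_cast; ring
    have h3 : ((Fintype.card (Fin d) : ℂ) / 2) = (((d : ℝ) / 2 : ℝ) : ℂ) := by simp
    rw [h2, h3, ← Complex.ofReal_cpow (by positivity), ← Complex.ofReal_mul,
      ← rpow_add (by positivity)]
    simp [neg_div]
  rw [hc, one_mul, Complex.I_sq]
  congr 1
  ring

instance isProbabilityMeasure_gaussMeasure (d : ℕ) : IsProbabilityMeasure (gaussMeasure d) := by
  rw [gaussMeasure_eq_stdGaussian]
  infer_instance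

instance isProbabilityMeasure_nullLaw (d n : ℕ) : IsProbabilityMeasure (nullLaw d n) := by
  unfold nullLaw
  infer_instance

lemma charFun_gaussMeasure (d : ℕ) (t : EuclideanSpace ℝ (Fin d)) :
    charFun (gaussMeasure d) t = Complex.exp (-‖t‖ ^ 2 / 2) := by
  rw [gaussMeasure_eq_stdGaussian, charFun_stdGaussian]

/-- The rescaled empirical mean `√n · X̄ₙ`. -/
def scaledMean (d n : ℕ) (X : Fin n → EuclideanSpace ℝ (Fin d)) : EuclideanSpace ℝ (Fin d) :=
  Real.sqrt n • ((n : ℝ)⁻¹ • ∑ i, X i)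

lemma measurable_scaledMean (d n : ℕ) : Measurable (scaledMean d n) := by
  unfold scaledMean
  fun_prop

lemma measurable_chiStat (d n : ℕ) : Measurable (chiStat d n) :=
  (measurable_scaledMean d n).norm.pow_const 2

/-- Under the null hypothesis the rescaled empirical mean is standard Gaussian. -/
lemma map_scaledMean_nullLaw (d n : ℕ) (hn : 1 ≤ n) :
    (nullLaw d n).map (scaledMean d n) = gaussMeasure d := by
  have hn0 : (0 : ℝ) < n := by exact_mod_cast hn
  have : IsProbabilityMeasure ((nullLaw d n).map (scaledMean d n)) :=
    Measure.isProbabilityMeasure_map (measurable_scaledMean d n).aemeasurable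
  refine Measure.ext_of_charFun (funext fun t => ?_)
  have hfun : scaledMean d n = fun X => (Real.sqrt n * (n : ℝ)⁻¹) • ∑ i, X i := by
    ext1 X
    rw [scaledMean, smul_smul]
  rw [hfun, charFun_map_smul_comp (by fun_prop), nullLaw, charFun_map_sum_pi_eq_prod]
  rw [Finset.prod_const, Pi.pow_apply, charFun_gaussMeasure, charFun_gaussMeasure,
    ← Complex.exp_nat_mul, Finset.card_univ, Fintype.card_fin]
  congr 1
  have h : (n : ℝ) * (-‖(Real.sqrt n * (n : ℝ)⁻¹) • t‖ ^ 2 / 2) = -‖t‖ ^ 2 / 2 := by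
    rw [norm_smul, mul_pow, norm_eq_abs, sq_abs, mul_pow, sq_sqrt hn0.le]
    field_simp
  exact_mod_cast h

/-- The variance of the square of a standard Gaussian variable. -/
def sqVar : ℝ := Var[fun x : ℝ => x ^ 2; gaussianReal 0 1]

lemma sqVar_nonneg : 0 ≤ sqVar := variance_nonneg _ _

lemma memLp_sq_gaussianReal : MemLp (fun x : ℝ => x ^ 2) 2 (gaussianReal 0 1) := by
  rw [memLp_two_iff_integrable_sq (by fun_prop)]
  refine ((memLp_id_gaussianReal (μ := 0) (v := 1) 4).integrable_norm_pow (p := 4)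
    (by norm_num)).congr (ae_of_all _ fun x => ?_)
  simp only [id, norm_eq_abs, ← pow_mul]
  exact Even.pow_abs (by decide) x

lemma integral_sq_gaussianReal : ∫ x : ℝ, x ^ 2 ∂gaussianReal 0 1 = 1 := by
  have h := variance_fun_id_gaussianReal (μ := 0) (v := 1)
  rw [variance_eq_integral (by fun_prop)] at h
  simpa using h

lemma gaussMeasure_norm_sq_deviation (d : ℕ) {c : ℝ} (hc : 0 < c) :
    gaussMeasure d {x | c ≤ |‖x‖ ^ 2 - d|} ≤ ENNReal.ofReal (d * sqVar / c ^ 2) := by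
  rw [gaussMeasure_eq_stdGaussian, ← map_pi_eq_stdGaussian,
    Measure.map_apply (by fun_prop) (measurableSet_le (by fun_prop) (by fun_prop))]
  have hL : ∀ i : Fin d, MemLp (fun x : Fin d → ℝ => x i ^ 2) 2
      (Measure.pi fun _ => gaussianReal 0 1) := fun i =>
    memLp_sq_gaussianReal.comp_measurePreserving
      (measurePreserving_eval (fun _ : Fin d => gaussianReal 0 1) i)
  have hmem : MemLp (∑ i, fun x : Fin d → ℝ => x i ^ 2) 2
      (Measure.pi fun _ => gaussianReal 0 1) := memLp_finsetSum' _ fun i _ => hL i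
  have hvar : Var[∑ i, fun x : Fin d → ℝ => x i ^ 2; Measure.pi fun _ => gaussianReal 0 1] =
      d * sqVar := by
    rw [variance_sum_pi (X := fun _ : Fin d => fun y : ℝ => y ^ 2)
      (fun _ => memLp_sq_gaussianReal)]
    simp [sqVar]
  have hmean : ∫ x : Fin d → ℝ, (∑ i, fun x : Fin d → ℝ => x i ^ 2) x
      ∂(Measure.pi fun _ => gaussianReal 0 1) = d := by
    simp_rw [Finset.sum_apply]
    rw [integral_finsetSum _ fun i _ => (hL i).integrable one_le_two]
    simp_rw [integral_comp_eval (μ := fun _ : Fin d => gaussianReal 0 1)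
      (f := fun y : ℝ => y ^ 2) memLp_sq_gaussianReal.1, integral_sq_gaussianReal]
    simp
  have h := meas_ge_le_variance_div_sq hmem hc
  rw [hvar, hmean] at h
  simpa [Set.preimage, EuclideanSpace.real_norm_sq_eq] using h

lemma gaussMeasure_inner_deviation (d : ℕ) (μ : EuclideanSpace ℝ (Fin d)) {c : ℝ} (hc : 0 < c) :
    gaussMeasure d {x | c ≤ |inner ℝ μ x|} ≤ ENNReal.ofReal (‖μ‖ ^ 2 / c ^ 2) := by
  rw [gaussMeasure_eq_stdGaussian]
  have h := meas_ge_le_variance_div_sq (X := innerSL ℝ μ)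
    (IsGaussian.memLp_dual (stdGaussian (EuclideanSpace ℝ (Fin d))) (innerSL ℝ μ) 2 (by simp)) hc
  rw [variance_dual_stdGaussian, integral_strongDual_stdGaussian] at h
  simpa using h

/-- Radius, in units of `√d`, of a `(1 - δ)`-confidence interval for `‖N(0, I_d)‖²` around `d`. -/
def devRadius (δ : ℝ) : ℝ := Real.sqrt ((sqVar + 1) / δ)

lemma devRadius_pos {δ : ℝ} (hδ : 0 < δ) : 0 < devRadius δ :=
  sqrt_pos.2 (div_pos (by linarith [sqVar_nonneg]) hδ)

lemma gaussMeasure_norm_sq_devRadius {d : ℕ} (hd : 1 ≤ d) {δ : ℝ} (hδ : 0 < δ) :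
    gaussMeasure d {x | devRadius δ * Real.sqrt d ≤ |‖x‖ ^ 2 - d|} ≤ ENNReal.ofReal δ := by
  have hd0 : (0 : ℝ) < d := by exact_mod_cast hd
  have hK := sqVar_nonneg
  refine (gaussMeasure_norm_sq_deviation d
    (mul_pos (devRadius_pos hδ) (sqrt_pos.2 hd0))).trans (ENNReal.ofReal_le_ofReal ?_)
  rw [mul_pow, devRadius, sq_sqrt (by positivity), sq_sqrt hd0.le, div_le_iff₀ (by positivity)]
  field_simp
  linarith

lemma nullLaw_chiStat_eq (d n : ℕ) (hn : 1 ≤ n) (t : ℝ) :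
    nullLaw d n {X | t < chiStat d n X} = gaussMeasure d {x | t < ‖x‖ ^ 2} := by
  rw [← map_scaledMean_nullLaw d n hn, Measure.map_apply (measurable_scaledMean d n)
    (measurableSet_lt (by fun_prop) (by fun_prop))]
  rfl

lemma nullLaw_chiStat_devRadius_le {d n : ℕ} (hd : 1 ≤ d) (hn : 1 ≤ n) {α : ℝ} (hα : 0 < α) :
    nullLaw d n {X | d + devRadius α * Real.sqrt d < chiStat d n X} ≤ ENNReal.ofReal α := by
  rw [nullLaw_chiStat_eq d n hn]
  refine (measure_mono fun x hx => ?_).trans (gaussMeasure_norm_sq_devRadius hd hα)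
  rw [Set.mem_ofPred_eq] at hx ⊢
  exact le_trans (by linarith) (le_abs_self _)

lemma bddBelow_upsilon_set (d n : ℕ) {α : ℝ} (hα : α < 1) :
    BddBelow {t : ℝ | nullLaw d n {X | t < chiStat d n X} ≤ ENNReal.ofReal α} := by
  refine ⟨0, fun t ht => ?_⟩
  by_contra! hlt
  have huniv : {X | t < chiStat d n X} = Set.univ :=
    Set.eq_univ_of_forall fun X => hlt.trans_le (sq_nonneg _)
  rw [Set.mem_ofPred_eq, huniv, measure_univ, ENNReal.one_le_ofReal] at ht
  linarith

lemma upsilon_le {d n : ℕ} (hd : 1 ≤ d) (hn : 1 ≤ n) {α : ℝ} (hα : α ∈ Set.Ioo (0 : ℝ) 1) :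
    upsilon d n α ≤ d + devRadius α * Real.sqrt d :=
  csInf_le (bddBelow_upsilon_set d n hα.2) (nullLaw_chiStat_devRadius_le hd hn hα.1)

/-- The quantile is attained, so the test has level `α`. -/
lemma nullLaw_upsilon_lt_chiStat_le {d n : ℕ} (hd : 1 ≤ d) (hn : 1 ≤ n) {α : ℝ} (hα : 0 < α) :
    nullLaw d n {X | upsilon d n α < chiStat d n X} ≤ ENNReal.ofReal α := by
  obtain ⟨u, hu_anti, hu_gt, hu_lim⟩ := exists_seq_strictAnti_tendsto (upsilon d n α)
  have hunion : {X | upsilon d n α < chiStat d n X} = ⋃ k, {X | u k < chiStat d n X} := by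
    ext X
    simp only [Set.mem_ofPred_eq, Set.mem_iUnion]
    exact ⟨fun h => ((hu_lim.eventually_lt_const h).exists), fun ⟨k, hk⟩ => (hu_gt k).trans hk⟩
  have hmono : Monotone fun k => {X | u k < chiStat d n X} := fun i j hij X hX =>
    (hu_anti.antitone hij).trans_lt hX
  rw [hunion, hmono.measure_iUnion]
  refine iSup_le fun k => ?_
  obtain ⟨t, ht, htk⟩ := exists_lt_of_csInf_lt
    (s := {t : ℝ | nullLaw d n {X | t < chiStat d n X} ≤ ENNReal.ofReal α})
    ⟨_, nullLaw_chiStat_devRadius_le (n := n) hd hn hα⟩ (hu_gt k)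
  exact (measure_mono fun X hX => htk.trans hX).trans ht

/-- The law on `ℝ` of the indicator of an event of probability `ε`. -/
def bernLaw (ε : ℝ) : Measure ℝ :=
  ENNReal.ofReal (1 - ε) • Measure.dirac 0 + ENNReal.ofReal ε • Measure.dirac 1

lemma isProbabilityMeasure_bernLaw {ε : ℝ} (hε : ε ∈ Set.Ioo (0 : ℝ) 1) :
    IsProbabilityMeasure (bernLaw ε) := by
  refine ⟨?_⟩
  simp only [bernLaw, Measure.add_apply, Measure.smul_apply, measure_univ, smul_eq_mul, mul_one]
  rw [← ENNReal.ofReal_add (by linarith [hε.2]) hε.1.le]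
  simp

lemma bernLaw_mem_Icc (ε : ℝ) : ∀ᵐ x ∂bernLaw ε, x ∈ Set.Icc (0 : ℝ) 1 := by
  rw [bernLaw, ae_add_measure_iff]
  constructor <;> refine Measure.ae_smul_measure ?_ _ <;> simp [ae_dirac_eq]

lemma integral_bernLaw {ε : ℝ} (hε : ε ∈ Set.Ioo (0 : ℝ) 1) : ∫ x, x ∂bernLaw ε = ε := by
  have h0 : Integrable (fun x : ℝ => x) (Measure.dirac 0) := integrable_dirac (by simp)
  have h1 : Integrable (fun x : ℝ => x) (Measure.dirac 1) := integrable_dirac (by simp)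
  rw [bernLaw, integral_add_measure (h0.smul_measure (by simp)) (h1.smul_measure (by simp)),
    integral_smul_measure, integral_smul_measure, integral_dirac, integral_dirac]
  simp [hε.1.le]

lemma bernLaw_sum_deviation {n : ℕ} (hn : 1 ≤ n) {ε : ℝ} (hε : ε ∈ Set.Ioo (0 : ℝ) 1)
    {c : ℝ} (hc : 0 < c) :
    (Measure.pi fun _ : Fin n => bernLaw ε) {x | c * Real.sqrt n ≤ |∑ i, x i - n * ε|} ≤
      ENNReal.ofReal (1 / c ^ 2) := by
  have := isProbabilityMeasure_bernLaw hε
  have hn0 : (0 : ℝ) < n := by exact_mod_cast hn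
  have hid : MemLp (fun x : ℝ => x) 2 (bernLaw ε) :=
    memLp_of_bounded (bernLaw_mem_Icc ε) (by fun_prop) 2
  have hL : ∀ i : Fin n, MemLp (fun x : Fin n → ℝ => x i) 2
      (Measure.pi fun _ => bernLaw ε) := fun i =>
    hid.comp_measurePreserving (measurePreserving_eval (fun _ : Fin n => bernLaw ε) i)
  have hmem : MemLp (∑ i, fun x : Fin n → ℝ => x i) 2
      (Measure.pi fun _ => bernLaw ε) := memLp_finsetSum' _ fun i _ => hL i
  have hvar : Var[∑ i, fun x : Fin n → ℝ => x i; Measure.pi fun _ => bernLaw ε] ≤ n := by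
    rw [variance_sum_pi (X := fun _ : Fin n => fun y : ℝ => y) (fun _ => hid)]
    have h := variance_le_sq_of_bounded (bernLaw_mem_Icc ε) (X := fun y : ℝ => y) (by fun_prop)
    rw [Finset.sum_const, Finset.card_univ, Fintype.card_fin, nsmul_eq_mul]
    nlinarith
  have hmean : ∫ x : Fin n → ℝ, (∑ i, fun x : Fin n → ℝ => x i) x
      ∂(Measure.pi fun _ => bernLaw ε) = n * ε := by
    simp_rw [Finset.sum_apply]
    rw [integral_finsetSum _ fun i _ => (hL i).integrable one_le_two]
    simp_rw [integral_comp_eval (μ := fun _ : Fin n => bernLaw ε)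
      (f := fun y : ℝ => y) hid.1, integral_bernLaw hε]
    simp
  have h := meas_ge_le_variance_div_sq hmem (mul_pos hc (sqrt_pos.2 hn0))
  rw [hmean] at h
  simp only [Finset.sum_apply] at h
  refine h.trans (ENNReal.ofReal_le_ofReal ?_)
  rw [mul_pow, sq_sqrt hn0.le, div_le_div_iff₀ (by positivity) (by positivity)]
  nlinarith [sq_nonneg c]

lemma map_add_gaussMeasure (d : ℕ) (μ : EuclideanSpace ℝ (Fin d)) :
    (gaussMeasure d).map (fun z => z + μ) =
      volume.withDensity fun x => ENNReal.ofReal (gaussDensity d (x - μ)) := by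
  ext s hs
  rw [Measure.map_apply (by fun_prop) hs, gaussMeasure,
    withDensity_apply _ (measurable_add_const μ hs), withDensity_apply _ hs,
    ← lintegral_indicator (measurable_add_const μ hs), ← lintegral_indicator hs,
    ← lintegral_add_right_eq_self (s.indicator _) μ]
  congr with z
  simp only [Set.indicator, add_sub_cancel_right]
  rfl

lemma mixMeasure_eq_map (d : ℕ) {ε : ℝ} (hε : ε ∈ Set.Ioo (0 : ℝ) 1)
    (μ : EuclideanSpace ℝ (Fin d)) :
    mixMeasure d ε μ = ((gaussMeasure d).prod (bernLaw ε)).map fun p => p.1 + p.2 • μ := by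
  have hf : Measurable (gaussDensity d) := (continuous_gaussDensity d).measurable
  have hmap : Measurable fun p : EuclideanSpace ℝ (Fin d) × ℝ => p.1 + p.2 • μ := by fun_prop
  have hprod : ((gaussMeasure d).prod (bernLaw ε)).map (fun p => p.1 + p.2 • μ) =
      ENNReal.ofReal (1 - ε) • gaussMeasure d +
        ENNReal.ofReal ε • (gaussMeasure d).map (fun z => z + μ) := by
    rw [bernLaw, Measure.prod_add, Measure.prod_smul_right, Measure.prod_smul_right,
      Measure.prod_dirac, Measure.prod_dirac, Measure.map_add _ _ hmap, Measure.map_smul,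
      Measure.map_smul, Measure.map_map hmap (by fun_prop), Measure.map_map hmap (by fun_prop)]
    congr 2
    · convert Measure.map_id
      ext1 z
      simp
    · refine congrArg (fun f => (gaussMeasure d).map f) (funext fun z => ?_)
      simp
  rw [hprod, map_add_gaussMeasure, gaussMeasure, mixMeasure,
    ← withDensity_smul _ hf.ennreal_ofReal,
    ← withDensity_smul _ (by fun_prop : Measurable fun x => ENNReal.ofReal (gaussDensity d (x - μ))),
    ← withDensity_add_left (hf.ennreal_ofReal.const_smul _)]
  congr with x
  have h1 : 0 ≤ 1 - ε := by linarith [hε.2]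
  simp only [Pi.add_apply, Pi.smul_apply, smul_eq_mul]
  rw [ENNReal.ofReal_add (mul_nonneg h1 (gaussDensity_nonneg d x))
    (mul_nonneg hε.1.le (gaussDensity_nonneg d _)), ENNReal.ofReal_mul h1,
    ENNReal.ofReal_mul hε.1.le]

/-- A mixture sample is a Gaussian sample shifted along `μ` by independent indicators. -/
lemma mixLaw_eq_map (d n : ℕ) {ε : ℝ} (hε : ε ∈ Set.Ioo (0 : ℝ) 1)
    (μ : EuclideanSpace ℝ (Fin d)) :
    mixLaw d n ε μ = ((nullLaw d n).prod (Measure.pi fun _ : Fin n => bernLaw ε)).map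
      fun p i => p.1 i + p.2 i • μ := by
  have := isProbabilityMeasure_bernLaw hε
  have hmap : Measurable fun p : EuclideanSpace ℝ (Fin d) × ℝ => p.1 + p.2 • μ := by fun_prop
  have : IsProbabilityMeasure (((gaussMeasure d).prod (bernLaw ε)).map fun p => p.1 + p.2 • μ) :=
    Measure.isProbabilityMeasure_map hmap.aemeasurable
  have harrow := measurePreserving_arrowProdEquivProdArrow (EuclideanSpace ℝ (Fin d)) ℝ (Fin n)
    (fun _ => gaussMeasure d) (fun _ => bernLaw ε)
  rw [mixLaw, mixMeasure_eq_map d hε, ← Measure.pi_map_pi fun _ => hmap.aemeasurable, nullLaw,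
    ← harrow.map_eq, Measure.map_map (by fun_prop) (MeasurableEquiv.measurable _)]
  rfl

lemma chiStat_shift (d n : ℕ) (z : Fin n → EuclideanSpace ℝ (Fin d)) (x : Fin n → ℝ)
    (μ : EuclideanSpace ℝ (Fin d)) :
    chiStat d n (fun i => z i + x i • μ) = ‖scaledMean d n z‖ ^ 2 +
      2 * (Real.sqrt n * (n : ℝ)⁻¹ * ∑ i, x i) * inner ℝ μ (scaledMean d n z) +
        ((Real.sqrt n * (n : ℝ)⁻¹ * ∑ i, x i) * ‖μ‖) ^ 2 := by
  have h : Real.sqrt n • ((n : ℝ)⁻¹ • ∑ i, (z i + x i • μ)) =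
      scaledMean d n z + (Real.sqrt n * (n : ℝ)⁻¹ * ∑ i, x i) • μ := by
    rw [Finset.sum_add_distrib, ← Finset.sum_smul, smul_add, smul_add, scaledMean]
    module
  rw [chiStat, h, norm_add_sq_real, real_inner_smul_right, norm_smul, real_inner_comm, mul_pow,
    mul_pow, norm_eq_abs, sq_abs]
  ring

/-- The separation constant of the test. -/
def sepConst (M α β : ℝ) : ℝ :=
  (2 * M + 8) * Real.sqrt (3 / β) + Real.sqrt (8 * (devRadius (β / 3) + devRadius α + 1))

lemma separation_bound {D q m M A A' B C a s g p w : ℝ} (hD : D = q ^ 2) (hq : 1 ≤ q)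
    (hm : 0 < m) (hmM : m ≤ M) (hA : 0 < A) (hA' : 0 < A') (hB : 0 < B)
    (hC : C = (2 * M + 8) * B + Real.sqrt (8 * (A + A' + 1))) (ha : C * q ≤ a * m)
    (hg : |g - w| < A * D) (hp : |p| < B * m) (hs : |s - a| < B) :
    w + A' * D < g + 2 * s * p + (s * m) ^ 2 := by
  rw [abs_lt] at hg hp hs
  set R := Real.sqrt (8 * (A + A' + 1))
  have hR0 : 0 ≤ R := sqrt_nonneg _
  have hR2 : R ^ 2 = 8 * (A + A' + 1) := sq_sqrt (by positivity)
  have hM : 0 < M := hm.trans_le hmM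
  have hC0 : 0 ≤ C := by rw [hC]; positivity
  have haC : C ≤ a * m := by nlinarith
  have hMB : (2 * M + 8) * B ≤ a * m := by linarith
  have hu : a * m - B * M ≤ s * m := by nlinarith
  have hu2 : a * m / 2 ≤ s * m := by nlinarith
  have hu4 : 4 * B ≤ s * m := by nlinarith [mul_pos hM hB]
  have hs0 : 0 < s := by
    by_contra! h
    nlinarith
  have hsp : -(B * (s * m)) ≤ s * p := by nlinarith
  have hRq : R * q ≤ a * m :=
    (mul_le_mul_of_nonneg_right (by rw [hC]; nlinarith [mul_pos hM hB]) (by linarith)).trans ha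
  have hsq : (R * q) ^ 2 ≤ (a * m) ^ 2 := pow_le_pow_left₀ (by positivity) hRq 2
  have hu_sq : (a * m / 2) ^ 2 ≤ (s * m) ^ 2 :=
    pow_le_pow_left₀ (by linarith [hC0.trans haC]) hu2 2
  rw [mul_pow, hR2, ← hD] at hsq
  have hDpos : 0 < D := by rw [hD]; positivity
  nlinarith

/-- The type II error of the test is at most `β` once `C · d^{1/4} ≤ √n · ε‖μ‖`. -/
lemma mixLaw_not_upsilon_lt_le {M α β : ℝ} (hα : α ∈ Set.Ioo (0 : ℝ) 1) (hβ : 0 < β)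
    {d n : ℕ} (hd : 1 ≤ d) (hn : 1 ≤ n) {ε : ℝ} {μ : EuclideanSpace ℝ (Fin d)}
    (hε : ε ∈ Set.Ioo (0 : ℝ) 1) (hμ : 0 < ‖μ‖) (hμM : ‖μ‖ ≤ M)
    (hsep : sepConst M α β * (d : ℝ) ^ ((1 : ℝ) / 4) ≤ Real.sqrt n * ε * ‖μ‖) :
    mixLaw d n ε μ {X | ¬ upsilon d n α < chiStat d n X} ≤ ENNReal.ofReal β := by
  have := isProbabilityMeasure_bernLaw hε
  have hn0 : (0 : ℝ) < n := by exact_mod_cast hn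
  have hd1 : (1 : ℝ) ≤ d := by exact_mod_cast hd
  have hβ3 : 0 < β / 3 := by positivity
  set B := Real.sqrt (3 / β)
  have hB : 0 < B := sqrt_pos.2 (by positivity)
  have hB2 : B ^ 2 = 3 / β := sq_sqrt (by positivity)
  set E₁ := {x : EuclideanSpace ℝ (Fin d) | devRadius (β / 3) * Real.sqrt d ≤ |‖x‖ ^ 2 - d|}
  set E₂ := {x : EuclideanSpace ℝ (Fin d) | B * ‖μ‖ ≤ |inner ℝ μ x|}
  set E₃ := {x : Fin n → ℝ | B * Real.sqrt n ≤ |∑ i, x i - n * ε|}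
  have hE₁ : MeasurableSet E₁ := measurableSet_le (by fun_prop) (by fun_prop)
  have hE₂ : MeasurableSet E₂ := measurableSet_le (by fun_prop) (by fun_prop)
  have h₁ : gaussMeasure d E₁ ≤ ENNReal.ofReal (β / 3) := gaussMeasure_norm_sq_devRadius hd hβ3
  have h₂ : gaussMeasure d E₂ ≤ ENNReal.ofReal (β / 3) := by
    refine (gaussMeasure_inner_deviation d μ (by positivity)).trans (ENNReal.ofReal_le_ofReal ?_)
    rw [mul_pow, hB2]
    exact le_of_eq (by field_simp)
  have h₃ : (Measure.pi fun _ : Fin n => bernLaw ε) E₃ ≤ ENNReal.ofReal (β / 3) := by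
    refine (bernLaw_sum_deviation hn hε hB).trans (ENNReal.ofReal_le_ofReal ?_)
    rw [hB2]
    exact le_of_eq (by field_simp)
  have hsub : (fun (p : (Fin n → EuclideanSpace ℝ (Fin d)) × (Fin n → ℝ)) i =>
        p.1 i + p.2 i • μ) ⁻¹' {X | ¬ upsilon d n α < chiStat d n X} ⊆
      (scaledMean d n ⁻¹' E₁ ∪ scaledMean d n ⁻¹' E₂) ×ˢ Set.univ ∪ Set.univ ×ˢ E₃ := by
    rintro ⟨z, x⟩ hzx
    by_contra! hout
    simp only [Set.mem_union, Set.mem_prod, Set.mem_preimage, Set.mem_univ, and_true, true_and,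
      not_or, E₁, E₂, E₃, Set.mem_ofPred_eq, not_le] at hout
    obtain ⟨⟨hg, hp⟩, hs⟩ := hout
    refine hzx ((upsilon_le hd hn hα).trans_lt ?_)
    rw [chiStat_shift]
    have hs' : |Real.sqrt n * (n : ℝ)⁻¹ * ∑ i, x i - Real.sqrt n * ε| < B := by
      have hfac : Real.sqrt n * (n : ℝ)⁻¹ * ∑ i, x i - Real.sqrt n * ε =
          (∑ i, x i - n * ε) / Real.sqrt n := by
        rw [eq_div_iff (sqrt_pos.2 hn0).ne']
        field_simp
        rw [sq_sqrt hn0.le]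
      rw [hfac, abs_div, abs_of_pos (sqrt_pos.2 hn0), div_lt_iff₀ (sqrt_pos.2 hn0)]
      exact hs
    refine separation_bound (q := (d : ℝ) ^ ((1 : ℝ) / 4)) ?_ (one_le_rpow hd1 (by norm_num))
      hμ hμM (devRadius_pos hβ3) (devRadius_pos hα.1) hB rfl hsep hg hp hs'
    rw [← rpow_natCast, ← rpow_mul (by positivity), sqrt_eq_rpow]
    norm_num
  have hmeas : MeasurableSet {X | ¬ upsilon d n α < chiStat d n X} :=
    (measurableSet_lt measurable_const (measurable_chiStat d n)).compl
  rw [mixLaw_eq_map d n hε, Measure.map_apply (by fun_prop) hmeas]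
  calc _ ≤ _ := measure_mono hsub
    _ ≤ _ := measure_union_le _ _
    _ ≤ (gaussMeasure d E₁ + gaussMeasure d E₂) +
        (Measure.pi fun _ : Fin n => bernLaw ε) E₃ := by
      rw [Measure.prod_prod, Measure.prod_prod, measure_univ, measure_univ, mul_one, one_mul,
        ← map_scaledMean_nullLaw d n hn, Measure.map_apply (measurable_scaledMean d n) hE₁,
        Measure.map_apply (measurable_scaledMean d n) hE₂]
      gcongr
      exact measure_union_le _ _
    _ ≤ ENNReal.ofReal (β / 3) + ENNReal.ofReal (β / 3) + ENNReal.ofReal (β / 3) := by gcongr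
    _ = ENNReal.ofReal β := by
      rw [← ENNReal.ofReal_add hβ3.le hβ3.le, ← ENNReal.ofReal_add (by positivity) hβ3.le]
      congr 1
      ring

/-- **Theorem (first testing procedure for `F₂[M]`).**
The test `Ψ₁ = 1{‖√n·X̄ₙ‖² > υ_α}` is of level `α`, and there is a positive constant
`C(α,β,M)` depending only on `α, β, M` such that for every `ρ ≥ C(α,β,M)·d^{1/4}/√n`
and every `f_{(ε,μ)} ∈ F₂[M]` with `ε‖μ‖ ≥ ρ`, the second-kind error `P_f(Ψ₁ = 0)`
is at most `β`. -/
theorem upperBound_mean_test (M α β : ℝ) (hM : 0 < M)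
    (hα : α ∈ Set.Ioo (0 : ℝ) 1) (hβ : β ∈ Set.Ioo (0 : ℝ) 1) :
    (∀ d n : ℕ, 1 ≤ d → 1 ≤ n →
      nullLaw d n {X | upsilon d n α < chiStat d n X} ≤ ENNReal.ofReal α) ∧
    ∃ C : ℝ, 0 < C ∧ ∀ d n : ℕ, 1 ≤ d → 1 ≤ n → ∀ ρ : ℝ,
      C * (d : ℝ) ^ ((1 : ℝ) / 4) / Real.sqrt n ≤ ρ →
      ∀ (ε : ℝ) (μ : EuclideanSpace ℝ (Fin d)), ε ∈ Set.Ioo (0 : ℝ) 1 → ‖μ‖ ≤ M →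
        ρ ≤ ε * ‖μ‖ →
        mixLaw d n ε μ {X | ¬ upsilon d n α < chiStat d n X} ≤ ENNReal.ofReal β := by
  have hC : 0 < sepConst M α β := by
    have hβ0 := hβ.1
    have hB : 0 < Real.sqrt (3 / β) := sqrt_pos.2 (by positivity)
    unfold sepConst
    positivity
  refine ⟨fun d n hd hn => nullLaw_upsilon_lt_chiStat_le hd hn hα.1, sepConst M α β, hC, ?_⟩
  intro d n hd hn ρ hρ ε μ hε hμM hρε
  have hn0 : 0 < Real.sqrt n := sqrt_pos.2 (by exact_mod_cast hn)
  have hd0 : (0 : ℝ) < d := by exact_mod_cast hd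
  have hpos : 0 < ε * ‖μ‖ := lt_of_lt_of_le (by positivity) (hρ.trans hρε)
  have hsep := (div_le_iff₀ hn0).1 (hρ.trans hρε)
  exact mixLaw_not_upsilon_lt_le hα hβ.1 hd hn hε (pos_of_mul_pos_right hpos hε.1.le) hμM
    (hsep.trans_eq (by ring))

end
end

section
/- Let (Z₁,…,Zₙ) be i.i.d. real random variables with density g, with order statistics Z_(1) ≤ … ≤ Z_(n), and let G₁[M] = {z ↦ (1−ε)φ(z) + ε·φ(z−τ) : ε ∈ (0,1), 0 < τ ≤ M}. Let K_n = {2^j : 0 ≤ j ≤ ⌊log₂(n/2)⌋}, for u ∈ (0,1) let z_{u,k} be the (1−u)-quantile of Z_(n−k+1) under the standard Gaussian null, α_n = sup{u ∈ (0,1) : P_{H₀}(∃k ∈ K_n, Z_(n−k+1) > z_{u,k}) ≤ α}, and T_α = sup_{k∈K_n} 1{Z_(n−k+1) > z_{α_n,k}}. Let β ∈ (0, 1−α). Assume n ≥ 3 and 8.25·ln(2·log₂(n/2)/α)/n ≤ ∫_M^∞ φ(x) dx. Then there exists a positive constant C(β,M) depending only on β and M such that for every ρ ≥ C(β,M)·√(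 ln ln(n)·ln(1/α)/n ), one has sup P_g(T_α = 0) ≤ β, the supremum being over all g = (1−ε)φ + εφ(·−τ) ∈ G₁[M] with ε·τ ≥ ρ. -/
open MeasureTheory Real

noncomputable section

/-- The standard Gaussian density `φ = φ₁` on `ℝ`. -/
def gaussDensity1 (x : ℝ) : ℝ := (Real.sqrt (2 * π))⁻¹ * Real.exp (-x ^ 2 / 2)

/-- The two-component unidimensional Gaussian mixture measure with density
`z ↦ (1-ε)·φ(z) + ε·φ(z-τ)`. -/
def mixMeasure1 (ε τ : ℝ) : Measure ℝ :=
  volume.withDensity fun z =>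
    ENNReal.ofReal ((1 - ε) * gaussDensity1 z + ε * gaussDensity1 (z - τ))

open scoped Classical in
/-- The `k`-th order statistic `Z_(k)` of the sample `z` (1-indexed):
the smallest `t` such that at least `k` of the `zᵢ` are `≤ t`. -/
def orderStat {n : ℕ} (z : Fin n → ℝ) (k : ℕ) : ℝ :=
  sInf {t : ℝ | k ≤ (Finset.univ.filter fun i => z i ≤ t).card}

/-- The set `K_n = {2^j : 0 ≤ j ≤ ⌊log₂(n/2)⌋}`. -/
def Kset (n : ℕ) : Finset ℕ := (Finset.range (Nat.log 2 (n / 2) + 1)).image (2 ^ ·)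

/-- Law of an i.i.d. `n`-sample of standard Gaussian real random variables
(the null `H₀`). -/
def nullPi (n : ℕ) : Measure (Fin n → ℝ) :=
  Measure.pi fun _ : Fin n => ProbabilityTheory.gaussianReal 0 1

/-- `z_{u,k}`, the `(1-u)`-quantile of the order statistic `Z_(n-k+1)` under the
standard Gaussian null. -/
def quant (n : ℕ) (u : ℝ) (k : ℕ) : ℝ :=
  sInf {t : ℝ | nullPi n {z | t < orderStat z (n - k + 1)} ≤ ENNReal.ofReal u}

/-- The corrected level
`α_n = sup{u ∈ (0,1) : P_{H₀}(∃ k ∈ K_n, Z_(n-k+1) > z_{u,k}) ≤ α}`. -/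
def alphaCorr (n : ℕ) (α : ℝ) : ℝ :=
  sSup {u : ℝ | u ∈ Set.Ioo (0 : ℝ) 1 ∧
    nullPi n {z | ∃ k ∈ Kset n, quant n u k < orderStat z (n - k + 1)} ≤ ENNReal.ofReal α}

/-- Rejection region of the unidimensional order-statistics test
`T_α = sup_{k ∈ K_n} 1{Z_(n-k+1) > z_{α_n,k}}`. -/
def rejRegion1d (n : ℕ) (α : ℝ) : Set (Fin n → ℝ) :=
  {z | ∃ k ∈ Kset n, quant n (alphaCorr n α) k < orderStat z (n - k + 1)}

open scoped Classical in
lemma orderStat_le_iff {n : ℕ} (z : Fin n → ℝ) {j : ℕ} (hj : 1 ≤ j) (hjn : j ≤ n) (t : ℝ) :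
    orderStat z j ≤ t ↔ j ≤ (Finset.univ.filter fun i => z i ≤ t).card := by
  set S : Set ℝ := {t : ℝ | j ≤ (Finset.univ.filter fun i => z i ≤ t).card} with hS
  have hne : S.Nonempty := by
    obtain ⟨b, hb⟩ := (Set.finite_range z).bddAbove
    refine ⟨b, ?_⟩
    have : (Finset.univ.filter fun i => z i ≤ b) = Finset.univ :=
      Finset.filter_true_of_mem fun i _ => hb ⟨i, rfl⟩
    simpa [hS, this] using hjn
  have hbdd : BddBelow S := by
    obtain ⟨a, ha⟩ := (Set.finite_range z).bddBelow
    refine ⟨a, fun s hs => ?_⟩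
    have hpos : 0 < (Finset.univ.filter fun i => z i ≤ s).card := lt_of_lt_of_le hj hs
    obtain ⟨i, hi⟩ := Finset.card_pos.mp hpos
    exact (ha ⟨i, rfl⟩).trans (Finset.mem_filter.mp hi).2
  refine ⟨fun h => ?_, fun h => csInf_le hbdd h⟩
  have hev : ∀ᶠ s in nhdsWithin t (Set.Ioi t), ∀ i, z i ≤ s → z i ≤ t := by
    rw [Filter.eventually_all]
    intro i
    rcases le_or_gt (z i) t with hi | hi
    · exact Filter.Eventually.of_forall fun _ _ => hi
    · filter_upwards [Ioo_mem_nhdsGT hi] with s hs hzs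
      exact absurd hzs (not_le.mpr hs.2)
  obtain ⟨s, hs, hts⟩ := (hev.and self_mem_nhdsWithin).exists
  obtain ⟨r, hr, hrs⟩ := exists_lt_of_csInf_lt hne (lt_of_le_of_lt h hts)
  refine le_trans hr (Finset.card_le_card fun i hi => ?_)
  simp only [Finset.mem_filter, Finset.mem_univ, true_and] at hi ⊢
  exact hs i (hi.trans hrs.le)

open scoped Classical in
/-- Hoeffding's inequality for the number of sample points falling in a set. -/
lemma pi_real_card_mem_ge_le (ν : Measure ℝ) [IsProbabilityMeasure ν] {A : Set ℝ}
    (hA : MeasurableSet A) {n : ℕ} (hn : 0 < n) {r δ : ℝ} (hδ : 0 ≤ δ)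
    (h : n * (ν.real A + δ) ≤ r) :
    (Measure.pi fun _ : Fin n => ν).real
      {z | r ≤ ((Finset.univ.filter fun i => z i ∈ A).card : ℝ)} ≤ exp (-2 * n * δ ^ 2) := by
  set X : ℝ → ℝ := A.indicator 1 with hX
  have hXm : Measurable X := measurable_one.indicator hA
  have hint : ∫ x, X x ∂ν = ν.real A := integral_indicator_one hA
  have hind : ProbabilityTheory.iIndepFun (fun (i : Fin n) (z : Fin n → ℝ) => X (z i) - ν.real A)
      (Measure.pi fun _ : Fin n => ν) :=
    ProbabilityTheory.iIndepFun_pi (X := fun _ x => X x - ν.real A)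
      fun _ => (hXm.sub_const _).aemeasurable
  have hsub : ∀ i ∈ (Finset.univ : Finset (Fin n)), ProbabilityTheory.HasSubgaussianMGF
      (fun z : Fin n → ℝ => X (z i) - ν.real A) ((‖(1 : ℝ) - 0‖₊ / 2) ^ 2)
      (Measure.pi fun _ : Fin n => ν) := by
    intro i _
    have := ProbabilityTheory.hasSubgaussianMGF_of_mem_Icc (a := 0) (b := 1)
      (μ := Measure.pi fun _ : Fin n => ν) (X := fun z => X (z i))
      (hXm.comp (measurable_pi_apply i)).aemeasurable
      (Filter.Eventually.of_forall fun z => by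
        by_cases hz : z i ∈ A <;> simp [hX, hz])
    rwa [integral_comp_eval (μ := fun _ : Fin n => ν) (f := X) hXm.aestronglyMeasurable,
      hint] at this
  have key := ProbabilityTheory.HasSubgaussianMGF.measure_sum_ge_le_of_iIndepFun hind hsub
    (ε := n * δ) (by positivity)
  have hn' : (0 : ℝ) < n := by exact_mod_cast hn
  calc _ ≤ (Measure.pi fun _ : Fin n => ν).real
        {z | n * δ ≤ ∑ i, (X (z i) - ν.real A)} := by
        refine measureReal_mono fun z hz => ?_
        simp only [Set.mem_ofPred_eq] at hz ⊢
        have : ∑ i, X (z i) = ((Finset.univ.filter fun i => z i ∈ A).card : ℝ) := by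
          simp [hX, Set.indicator_apply]
        rw [Finset.sum_sub_distrib, this]
        simp only [Finset.sum_const, Finset.card_univ, Fintype.card_fin, nsmul_eq_mul]
        linarith
    _ ≤ _ := key
    _ = _ := by
        congr 1
        simp
        field_simp

instance (n : ℕ) : IsProbabilityMeasure (nullPi n) := by
  unfold nullPi
  infer_instance

/-- Every positive level is attained as an upper bound for the tail of the order statistic. -/
lemma exists_nullPi_lt_orderStat_le {n k : ℕ} (hk : 1 ≤ k) (hkn : k ≤ n) {u : ℝ} (hu : 0 < u) :
    ∃ t : ℝ, nullPi n {z | t < orderStat z (n - k + 1)} ≤ ENNReal.ofReal u := by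
  classical
  have hanti : Antitone fun m : ℕ => {z : Fin n → ℝ | (m : ℝ) < orderStat z (n - k + 1)} :=
    fun a b hab z hz => by
      simp only [Set.mem_ofPred_eq] at hz ⊢
      exact lt_of_le_of_lt (Nat.cast_le.mpr hab) hz
  have hmeas : ∀ t : ℝ, MeasurableSet {z : Fin n → ℝ | t < orderStat z (n - k + 1)} := by
    intro t
    have : {z : Fin n → ℝ | t < orderStat z (n - k + 1)} =
        {z | (∑ i, if z i ≤ t then 1 else 0) < n - k + 1} := by
      ext z
      rw [Set.mem_ofPred_eq, ← not_le, orderStat_le_iff z (by omega) (by omega), not_le,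
        Finset.card_filter, Set.mem_ofPred_eq]
    rw [this]
    refine measurableSet_lt (Finset.measurable_sum _ fun i _ => ?_) measurable_const
    exact Measurable.ite (measurableSet_le (measurable_pi_apply i) measurable_const)
      measurable_const measurable_const
  have hlim := tendsto_measure_iInter_atTop (μ := nullPi n)
    (fun m : ℕ => (hmeas (m : ℝ)).nullMeasurableSet) hanti ⟨0, measure_ne_top _ _⟩
  have hempty : ⋂ m : ℕ, {z : Fin n → ℝ | (m : ℝ) < orderStat z (n - k + 1)} = ∅ := by
    refine Set.eq_empty_of_forall_notMem fun z hz => ?_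
    obtain ⟨m, hm⟩ := exists_nat_ge (orderStat z (n - k + 1))
    exact absurd (Set.mem_iInter.mp hz m) (not_lt.mpr hm)
  rw [hempty, measure_empty] at hlim
  obtain ⟨m, hm⟩ := (hlim.eventually (gt_mem_nhds (ENNReal.ofReal_pos.mpr hu))).exists
  exact ⟨m, hm.le⟩

lemma nullPi_quant_lt_orderStat_le {n k : ℕ} (hk : 1 ≤ k) (hkn : k ≤ n) {u : ℝ} (hu : 0 < u) :
    nullPi n {z | quant n u k < orderStat z (n - k + 1)} ≤ ENNReal.ofReal u := by
  set S : Set ℝ := {t : ℝ | nullPi n {z | t < orderStat z (n - k + 1)} ≤ ENNReal.ofReal u}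
    with hS
  have hne : S.Nonempty := exists_nullPi_lt_orderStat_le hk hkn hu
  have hup : ∀ s ∈ S, ∀ t, s ≤ t → t ∈ S := fun s hs t hst =>
    (measure_mono fun z hz => lt_of_le_of_lt hst hz).trans hs
  have habove : ∀ t, quant n u k < t → t ∈ S := fun t ht => by
    obtain ⟨s, hs, hst⟩ := exists_lt_of_csInf_lt hne ht
    exact hup s hs t hst.le
  obtain ⟨v, hv, hvgt, hvlim⟩ := exists_seq_strictAnti_tendsto (quant n u k)
  have hunion : {z : Fin n → ℝ | quant n u k < orderStat z (n - k + 1)} =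
      ⋃ m, {z | v m < orderStat z (n - k + 1)} := by
    ext z
    simp only [Set.mem_ofPred_eq, Set.mem_iUnion]
    exact ⟨fun hz => (hvlim.eventually (gt_mem_nhds hz)).exists,
      fun ⟨m, hm⟩ => (hvgt m).trans hm⟩
  have hmono : Monotone fun m => {z : Fin n → ℝ | v m < orderStat z (n - k + 1)} :=
    fun a b hab z hz => lt_of_le_of_lt (hv.antitone hab) hz
  rw [hunion, hmono.measure_iUnion]
  exact iSup_le fun m => habove _ (hvgt m)

lemma mem_Kset_bounds {n k : ℕ} (hn : 3 ≤ n) (hk : k ∈ Kset n) : 1 ≤ k ∧ k ≤ n := by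
  simp only [Kset, Finset.mem_image, Finset.mem_range] at hk
  obtain ⟨j, hj, rfl⟩ := hk
  refine ⟨Nat.one_le_two_pow, ?_⟩
  have := (Nat.pow_le_pow_right two_pos (Nat.lt_succ_iff.mp hj)).trans
    (Nat.pow_log_le_self 2 (x := n / 2) (by omega))
  omega

/-- Bonferroni lower bound for the corrected level. -/
lemma div_card_le_alphaCorr {n : ℕ} (hn : 3 ≤ n) {α : ℝ} (hα : α ∈ Set.Ioo (0 : ℝ) 1) :
    α / (Nat.log 2 (n / 2) + 1 : ℕ) ≤ alphaCorr n α := by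
  set m := Nat.log 2 (n / 2) + 1 with hm
  have hm1 : (1 : ℝ) ≤ (m : ℝ) := by exact_mod_cast Nat.le_add_left 1 _
  have hm0 : (0 : ℝ) < m := by linarith
  have hu : 0 < α / m := div_pos hα.1 hm0
  refine le_csSup ⟨1, fun u hu => hu.1.2.le⟩ ⟨⟨hu, ?_⟩, ?_⟩
  · exact lt_of_le_of_lt (div_le_self hα.1.le hm1) hα.2
  have hset : {z : Fin n → ℝ | ∃ k ∈ Kset n, quant n (α / m) k < orderStat z (n - k + 1)} =
      ⋃ k ∈ Kset n, {z | quant n (α / m) k < orderStat z (n - k + 1)} := by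
    ext z
    simp
  rw [hset]
  calc _ ≤ ∑ k ∈ Kset n, nullPi n {z | quant n (α / m) k < orderStat z (n - k + 1)} :=
        measure_biUnion_finset_le _ _
    _ ≤ ∑ k ∈ Kset n, ENNReal.ofReal (α / m) := Finset.sum_le_sum fun k hk =>
        nullPi_quant_lt_orderStat_le (mem_Kset_bounds hn hk).1 (mem_Kset_bounds hn hk).2 hu
    _ ≤ m * ENNReal.ofReal (α / m) := by
        rw [Finset.sum_const, nsmul_eq_mul]
        gcongr
        exact Finset.card_image_le.trans (by simp [hm])
    _ = ENNReal.ofReal α := by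
        rw [← ENNReal.ofReal_natCast, ← ENNReal.ofReal_mul hm0.le, mul_div_cancel₀ _ hm0.ne']

/-- A nonnegative threshold whose tail probability is at most a level below `α_n` dominates the
critical value at level `α_n`. -/
lemma quant_alphaCorr_le {n k : ℕ} {α u t : ℝ} (ht : 0 ≤ t) (hu : u ≤ alphaCorr n α)
    (h : nullPi n {z | t < orderStat z (n - k + 1)} ≤ ENNReal.ofReal u) :
    quant n (alphaCorr n α) k ≤ t := by
  unfold quant
  set S : Set ℝ := {t : ℝ | nullPi n {z | t < orderStat z (n - k + 1)} ≤
    ENNReal.ofReal (alphaCorr n α)} with hS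
  by_cases hb : BddBelow S
  · exact csInf_le hb (h.trans (ENNReal.ofReal_le_ofReal hu))
  · rw [Real.sInf_of_not_bddBelow hb]
    exact ht

lemma gaussDensity1_eq_gaussianPDFReal (τ x : ℝ) :
    gaussDensity1 (x - τ) = ProbabilityTheory.gaussianPDFReal τ 1 x := by
  simp [gaussDensity1, ProbabilityTheory.gaussianPDFReal]

lemma gaussDensity1_eq : gaussDensity1 = ProbabilityTheory.gaussianPDFReal 0 1 := by
  ext x
  rw [← gaussDensity1_eq_gaussianPDFReal, sub_zero]

lemma setIntegral_gaussDensity1_le_one (s : Set ℝ) : ∫ x in s, gaussDensity1 x ≤ 1 := by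
  rw [gaussDensity1_eq, ← ProbabilityTheory.integral_gaussianPDFReal_eq_one 0 one_ne_zero]
  exact setIntegral_le_integral (ProbabilityTheory.integrable_gaussianPDFReal 0 1)
    (Filter.Eventually.of_forall (ProbabilityTheory.gaussianPDFReal_nonneg 0 1))

lemma mixMeasure1_eq {ε τ : ℝ} (hε : ε ∈ Set.Ioo (0 : ℝ) 1) :
    mixMeasure1 ε τ = ENNReal.ofReal (1 - ε) • ProbabilityTheory.gaussianReal 0 1 +
      ENNReal.ofReal ε • ProbabilityTheory.gaussianReal τ 1 := by
  have h1 : 0 ≤ 1 - ε := by linarith [hε.2]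
  rw [ProbabilityTheory.gaussianReal_of_var_ne_zero _ one_ne_zero,
    ProbabilityTheory.gaussianReal_of_var_ne_zero _ one_ne_zero,
    ← withDensity_smul _ (ProbabilityTheory.measurable_gaussianPDF _ _),
    ← withDensity_smul _ (ProbabilityTheory.measurable_gaussianPDF _ _),
    ← withDensity_add_left ((ProbabilityTheory.measurable_gaussianPDF _ _).const_smul _)]
  unfold mixMeasure1
  congr 1
  ext z
  have hg := ProbabilityTheory.gaussianPDFReal_nonneg
  rw [gaussDensity1_eq_gaussianPDFReal, gaussDensity1_eq, ENNReal.ofReal_add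
    (mul_nonneg h1 (hg _ _ _)) (mul_nonneg hε.1.le (hg _ _ _)), ENNReal.ofReal_mul h1,
    ENNReal.ofReal_mul hε.1.le]
  rfl

lemma isProbabilityMeasure_mixMeasure1 {ε τ : ℝ} (hε : ε ∈ Set.Ioo (0 : ℝ) 1) :
    IsProbabilityMeasure (mixMeasure1 ε τ) := by
  refine ⟨?_⟩
  rw [mixMeasure1_eq hε]
  simp only [Measure.coe_add, Measure.coe_smul, Pi.add_apply, Pi.smul_apply, measure_univ,
    smul_eq_mul, mul_one]
  rw [← ENNReal.ofReal_add (by linarith [hε.2]) hε.1.le]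
  simp

lemma mixMeasure1_real_Iic {ε τ : ℝ} (hε : ε ∈ Set.Ioo (0 : ℝ) 1) (t : ℝ) :
    (mixMeasure1 ε τ).real (Set.Iic t) =
      (1 - ε) * (ProbabilityTheory.gaussianReal 0 1).real (Set.Iic t) +
        ε * (ProbabilityTheory.gaussianReal 0 1).real (Set.Iic (t - τ)) := by
  have hτ : (ProbabilityTheory.gaussianReal τ 1).real (Set.Iic t) =
      (ProbabilityTheory.gaussianReal 0 1).real (Set.Iic (t - τ)) := by
    have := ProbabilityTheory.gaussianReal_map_add_const (μ := 0) (v := 1) τ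
    rw [zero_add] at this
    rw [← this, map_measureReal_apply (by fun_prop) measurableSet_Iic]
    congr 1
    ext x
    simp [le_sub_iff_add_le]
  rw [← hτ, mixMeasure1_eq hε, measureReal_add_apply
      (ENNReal.mul_ne_top ENNReal.ofReal_ne_top (measure_ne_top _ _))
      (ENNReal.mul_ne_top ENNReal.ofReal_ne_top (measure_ne_top _ _)), measureReal_ennreal_smul_apply,
    measureReal_ennreal_smul_apply, ENNReal.toReal_ofReal (by linarith [hε.2]),
    ENNReal.toReal_ofReal hε.1.le]

lemma continuous_gaussDensity1 : Continuous gaussDensity1 := by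
  unfold gaussDensity1
  fun_prop

lemma gaussianReal_real_Iic_sub {a b : ℝ} (hab : a ≤ b) :
    (ProbabilityTheory.gaussianReal 0 1).real (Set.Iic b) -
      (ProbabilityTheory.gaussianReal 0 1).real (Set.Iic a) = ∫ x in a..b, gaussDensity1 x := by
  have hdiff : Set.Iic b \ Set.Iic a = Set.Ioc a b := by
    ext x
    simp [and_comm]
  rw [intervalIntegral.integral_of_le hab, ← hdiff,
    ← measureReal_sdiff (Set.Iic_subset_Iic.mpr hab) measurableSet_Iic, measureReal_def,
    ProbabilityTheory.gaussianReal_apply_eq_integral _ one_ne_zero, ENNReal.toReal_ofReal,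
    gaussDensity1_eq]
  exact integral_nonneg fun x => ProbabilityTheory.gaussianPDFReal_nonneg _ _ _

lemma gaussianReal_real_Iic_zero :
    (ProbabilityTheory.gaussianReal 0 1).real (Set.Iic 0) = 1 / 2 := by
  have := ProbabilityTheory.nullSingletonClass_gaussianReal (μ := 0) (v := 1) one_ne_zero
  have h1 : (ProbabilityTheory.gaussianReal 0 1).real (Set.Iic 0) =
      (ProbabilityTheory.gaussianReal 0 1).real (Set.Ici 0) := by
    have h := ProbabilityTheory.gaussianReal_map_neg (μ := 0) (v := 1)
    rw [neg_zero] at h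
    conv_lhs => rw [← h, map_measureReal_apply (by fun_prop) measurableSet_Iic]
    congr 1
    ext x
    simp
  have h2 := probReal_compl_eq_one_sub (μ := ProbabilityTheory.gaussianReal 0 1)
    (measurableSet_Iic (a := (0 : ℝ)))
  rw [Set.compl_Iic, measureReal_congr Ioi_ae_eq_Ici, ← h1] at h2
  linarith

/-- The standard Gaussian distribution function takes every value between `1/2` and its value at
`T` on `[0, T]`. -/
lemma exists_gaussianReal_real_Iic_eq {T s : ℝ} (hT : 0 ≤ T) (hs : 1 / 2 ≤ s)
    (hsT : s ≤ (ProbabilityTheory.gaussianReal 0 1).real (Set.Iic T)) :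
    ∃ t ∈ Set.Icc 0 T, (ProbabilityTheory.gaussianReal 0 1).real (Set.Iic t) = s := by
  have hF : ∀ t, 0 ≤ t → (ProbabilityTheory.gaussianReal 0 1).real (Set.Iic t) =
      1 / 2 + ∫ x in (0 : ℝ)..t, gaussDensity1 x := fun t ht => by
    rw [← gaussianReal_real_Iic_sub ht, gaussianReal_real_Iic_zero]
    ring
  have hcont : Continuous fun t => 1 / 2 + ∫ x in (0 : ℝ)..t, gaussDensity1 x :=
    continuous_const.add (intervalIntegral.continuous_primitive
      (fun a b => continuous_gaussDensity1.intervalIntegrable a b) 0)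
  obtain ⟨t, ht, hts⟩ := intermediate_value_Icc hT hcont.continuousOn (a := 0)
    (show s ∈ Set.Icc _ _ from ⟨by simpa using hs, by simpa [hF T hT] using hsT⟩)
  exact ⟨t, ht, (hF t ht.1).trans hts⟩

lemma gaussDensity1_pos (x : ℝ) : 0 < gaussDensity1 x := by
  unfold gaussDensity1
  positivity

lemma gaussDensity1_le_of_abs_le {x R : ℝ} (h : |x| ≤ R) : gaussDensity1 R ≤ gaussDensity1 x := by
  unfold gaussDensity1
  have : x ^ 2 ≤ R ^ 2 := sq_le_sq' (abs_le.mp h).1 (abs_le.mp h).2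
  gcongr

lemma mul_gaussDensity1_le_gaussianReal_real_Iic_sub {T M t τ : ℝ} (ht : t ∈ Set.Icc 0 T)
    (hτ : 0 < τ) (hτM : τ ≤ M) :
    τ * gaussDensity1 (T + M) ≤ (ProbabilityTheory.gaussianReal 0 1).real (Set.Iic t) -
      (ProbabilityTheory.gaussianReal 0 1).real (Set.Iic (t - τ)) := by
  rw [gaussianReal_real_Iic_sub (by linarith)]
  have := intervalIntegral.integral_mono_on (a := t - τ) (b := t) (μ := volume) (by linarith)
    (_root_.intervalIntegrable_const (c := gaussDensity1 (T + M)))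
    (continuous_gaussDensity1.intervalIntegrable _ _)
    (fun x hx => gaussDensity1_le_of_abs_le (abs_le.mpr ⟨by linarith [hx.1, ht.1, ht.2],
      by linarith [hx.2, ht.2]⟩))
  simpa using this

lemma exists_le_gaussianReal_real_Iic {s : ℝ} (hs : s < 1) :
    ∃ T : ℝ, 0 ≤ T ∧ s ≤ (ProbabilityTheory.gaussianReal 0 1).real (Set.Iic T) := by
  obtain ⟨T, hT, hT0⟩ := (((ProbabilityTheory.tendsto_cdf_atTop
    (ProbabilityTheory.gaussianReal 0 1)).eventually (lt_mem_nhds hs)).and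
      (Filter.eventually_ge_atTop 0)).exists
  exact ⟨T, hT0, by rw [← ProbabilityTheory.cdf_eq_real]; exact hT.le⟩

lemma card_Kset_le_two_mul_logb {n : ℕ} (hn : 3 ≤ n) :
    ((Nat.log 2 (n / 2) + 1 : ℕ) : ℝ) ≤ 2 * Real.logb 2 ((n : ℝ) / 2) := by
  have hn' : (3 : ℝ) ≤ n := by exact_mod_cast hn
  rcases Nat.eq_zero_or_pos (Nat.log 2 (n / 2)) with h | h
  · rw [h]
    have : (1 : ℝ) ≤ Real.logb 2 (((n : ℝ) / 2) ^ 2) := by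
      rw [Real.le_logb_iff_rpow_le one_lt_two (by positivity)]
      norm_num
      nlinarith
    rw [Real.logb_pow] at this
    push_cast at this ⊢
    linarith
  · have h1 : (Nat.log 2 (n / 2) : ℝ) ≤ Real.logb 2 ((n : ℝ) / 2) := by
      rw [Real.le_logb_iff_rpow_le one_lt_two (by positivity), Real.rpow_natCast]
      calc ((2 : ℝ) ^ Nat.log 2 (n / 2)) ≤ ((n / 2 : ℕ) : ℝ) := by
            exact_mod_cast Nat.pow_log_le_self 2 (x := n / 2) (by omega)
        _ ≤ (n : ℝ) / 2 := Nat.cast_div_le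
    have h2 : (1 : ℝ) ≤ Nat.log 2 (n / 2) := by exact_mod_cast h
    push_cast
    linarith

lemma log_log_three_pos : 0 < Real.log (Real.log 3) :=
  Real.log_pos ((Real.lt_log_iff_exp_lt (by norm_num)).mpr
    (Real.exp_one_lt_d9.trans (by norm_num)))

lemma two_mul_logb_le {n : ℕ} (hn : 3 ≤ n) :
    2 * Real.logb 2 ((n : ℝ) / 2) ≤ 3 * Real.log n := by
  have hn' : (3 : ℝ) ≤ n := by exact_mod_cast hn
  have hlog : 0 ≤ Real.log n := Real.log_nonneg (by linarith)
  have h2 := Real.log_two_gt_d9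
  rw [Real.logb, Real.log_div (by positivity) two_ne_zero, ← mul_div_assoc,
    div_le_iff₀ (by linarith)]
  nlinarith

lemma log_level_le {n : ℕ} (hn : 3 ≤ n) {α : ℝ} (hα : 0 < α) :
    Real.log (2 * Real.logb 2 ((n : ℝ) / 2) / α) ≤
      Real.log 3 + Real.log (Real.log n) + Real.log (1 / α) := by
  have hn' : (3 : ℝ) ≤ n := by exact_mod_cast hn
  have hlog : 0 < Real.log n := Real.log_pos (by linarith)
  have hpos : 0 < 2 * Real.logb 2 ((n : ℝ) / 2) :=
    lt_of_lt_of_le (by positivity) (card_Kset_le_two_mul_logb hn)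
  rw [← Real.log_mul (by norm_num) hlog.ne', ← Real.log_mul (by positivity) (by positivity),
    mul_one_div]
  exact Real.log_le_log (by positivity) (div_le_div_of_nonneg_right (two_mul_logb_le hn) hα.le)

open scoped Classical in
/-- Type II error bound for the test based on the largest element of `K_n`, given that the
distribution function under the alternative is small enough at a suitable threshold. -/
lemma pi_compl_rejRegion1d_le {n : ℕ} (hn : 3 ≤ n) {α β t δ δ' : ℝ}
    (hα : α ∈ Set.Ioo (0 : ℝ) 1) (ν : Measure ℝ) [IsProbabilityMeasure ν] (ht : 0 ≤ t)
    (hδ : 0 ≤ δ) (hδ' : 0 ≤ δ')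
    (hnull : (ProbabilityTheory.gaussianReal 0 1).real (Set.Iic t) =
      1 - (2 ^ Nat.log 2 (n / 2) / n - δ))
    (hδα : exp (-2 * n * δ ^ 2) ≤ α / (Nat.log 2 (n / 2) + 1 : ℕ))
    (halt : ν.real (Set.Iic t) + δ' ≤ 1 - 2 ^ Nat.log 2 (n / 2) / n)
    (hδβ : exp (-2 * n * δ' ^ 2) ≤ β) :
    Measure.pi (fun _ : Fin n => ν) (rejRegion1d n α)ᶜ ≤ ENNReal.ofReal β := by
  set k := 2 ^ Nat.log 2 (n / 2) with hk
  have hkK : k ∈ Kset n := Finset.mem_image_of_mem _ (by simp)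
  obtain ⟨hk1, hkn⟩ := mem_Kset_bounds hn hkK
  have hn0 : (0 : ℝ) < n := by exact_mod_cast (by omega : 0 < n)
  have hkr : (2 : ℝ) ^ Nat.log 2 (n / 2) = k := by simp [hk]
  rw [hkr] at hnull halt
  have hcrit : quant n (alphaCorr n α) k ≤ t := by
    refine quant_alphaCorr_le ht (div_card_le_alphaCorr hn hα) ?_
    have hoeff := pi_real_card_mem_ge_le (ProbabilityTheory.gaussianReal 0 1)
      (measurableSet_Ioi (a := t)) (n := n) (by omega) (r := k) hδ (by
        rw [← Set.compl_Iic, probReal_compl_eq_one_sub measurableSet_Iic, hnull]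
        apply le_of_eq
        field_simp
        ring)
    refine (measure_mono fun z hz => ?_).trans (ENNReal.le_ofReal_iff_toReal_le
      (measure_ne_top _ _) (div_nonneg hα.1.le (Nat.cast_nonneg _)) |>.mpr (hoeff.trans hδα))
    rw [Set.mem_ofPred_eq, ← not_le, orderStat_le_iff z (by omega) (by omega), not_le] at hz
    have hcard := Finset.card_filter_add_card_filter_not
      (s := (Finset.univ : Finset (Fin n))) (fun i => z i ≤ t)
    simp only [not_le, Finset.card_univ, Fintype.card_fin] at hcard
    simp only [Set.mem_ofPred_eq, Set.mem_Ioi, Nat.cast_le]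
    omega
  have hoeff := pi_real_card_mem_ge_le ν (measurableSet_Iic (a := t)) (n := n) (by omega)
    (r := n - k) hδ' (by
      refine (mul_le_mul_of_nonneg_left halt hn0.le).trans (le_of_eq ?_)
      field_simp)
  refine (measure_mono fun z hz => ?_).trans (ENNReal.le_ofReal_iff_toReal_le
    (measure_ne_top _ _) ((exp_nonneg _).trans hδβ) |>.mpr (hoeff.trans hδβ))
  have hz' : orderStat z (n - k + 1) ≤ t := by
    refine le_trans (not_lt.mp fun hlt => hz ⟨k, hkK, hlt⟩) hcrit
  rw [orderStat_le_iff z (by omega) (by omega)] at hz'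
  simp only [Set.mem_ofPred_eq, Set.mem_Iic, ← Nat.cast_sub hkn, Nat.cast_le]
  omega

/-- The exponential rate attached to the deviation `√(L / (2n))` is `L`. -/
lemma neg_two_mul_mul_sqrt_sq {n L : ℝ} (hn : 0 < n) (hL : 0 ≤ L) :
    -2 * n * Real.sqrt (L / (2 * n)) ^ 2 = -L := by
  rw [Real.sq_sqrt (by positivity)]
  field_simp

/-- A quantity dominated by a multiple of `Q` has a deviation of order `√(Q / n)`. -/
lemma sqrt_div_two_mul_le {n L c Q : ℝ} (hn : 0 < n) (hL : 0 ≤ L) (hc : 0 ≤ c) (h : L ≤ c * Q) :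
    Real.sqrt (L / (2 * n)) ≤ Real.sqrt c * Real.sqrt (Q / n) := by
  rw [← Real.sqrt_mul hc]
  refine Real.sqrt_le_sqrt ?_
  calc L / (2 * n) ≤ L / n := div_le_div_of_nonneg_left hL hn (by linarith)
    _ ≤ c * Q / n := by gcongr
    _ = c * (Q / n) := mul_div_assoc _ _ _

/-- **Lemma (unidimensional order-statistics test).**
Assume `n ≥ 3` and `8.25·ln(2·log₂(n/2)/α)/n ≤ ∫_M^∞ φ(x)dx`. There exists a positive
constant `C(β,M)` depending only on `β, M` such that for every
`ρ ≥ C(β,M)·√(ln ln(n)·ln(1/α)/n)` and every `g = (1-ε)φ + εφ(·-τ) ∈ G₁[M]` with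
`ε·τ ≥ ρ`, one has `P_g(T_α = 0) ≤ β`. -/
theorem unidimensional_test (β M : ℝ) (hM : 0 < M) :
    ∃ C : ℝ, 0 < C ∧ ∀ (α : ℝ) (n : ℕ), α ∈ Set.Ioo (0 : ℝ) 1 →
      β ∈ Set.Ioo (0 : ℝ) (1 - α) → 3 ≤ n →
      8.25 * Real.log (2 * Real.logb 2 ((n : ℝ) / 2) / α) / n ≤
        ∫ x in Set.Ioi M, gaussDensity1 x →
      ∀ ρ : ℝ, C * Real.sqrt (Real.log (Real.log n) * Real.log (1 / α) / n) ≤ ρ →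
      ∀ ε τ : ℝ, ε ∈ Set.Ioo (0 : ℝ) 1 → 0 < τ → τ ≤ M → ρ ≤ ε * τ →
        Measure.pi (fun _ : Fin n => mixMeasure1 ε τ) (rejRegion1d n α)ᶜ ≤
          ENNReal.ofReal β := by
  by_cases hβ : β ∈ Set.Ioo (0 : ℝ) 1
  swap
  · refine ⟨1, one_pos, fun α n hα hβ' => absurd ⟨hβ'.1, ?_⟩ hβ⟩
    linarith [hβ'.2, hα.1]
  obtain ⟨T, hT0, hT⟩ := exists_le_gaussianReal_real_Iic (s := 0.997) (by norm_num)
  set a₀ := Real.log (Real.log 3) with ha₀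
  set b₀ := Real.log (1 / (1 - β)) with hb₀
  have ha₀pos : 0 < a₀ := log_log_three_pos
  have h1β : 0 < 1 - β := by linarith [hβ.2]
  have hb₀pos : 0 < b₀ := Real.log_pos ((one_lt_div h1β).mpr (by linarith [hβ.1]))
  have hl3 : 0 < Real.log 3 := Real.log_pos (by norm_num)
  have hlβ : 0 < Real.log (1 / β) := Real.log_pos ((one_lt_div hβ.1).mpr hβ.2)
  set C₁ := Real.log 3 / (a₀ * b₀) + 1 / b₀ + 1 / a₀ with hC₁
  set C₂ := Real.log (1 / β) / (a₀ * b₀) with hC₂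
  have hC₁pos : 0 < C₁ := by positivity
  have hC₂pos : 0 < C₂ := by positivity
  set c := gaussDensity1 (T + M) with hc
  have hcpos : 0 < c := gaussDensity1_pos _
  refine ⟨(Real.sqrt C₁ + Real.sqrt C₂) / c, by positivity, ?_⟩
  intro α n hα hβα hn hsmall ρ hρ ε τ hε hτ hτM hετ
  have hn' : (3 : ℝ) ≤ n := by exact_mod_cast hn
  have hn0 : (0 : ℝ) < n := by linarith
  set L := Real.log (2 * Real.logb 2 ((n : ℝ) / 2) / α) with hL
  set a := Real.log (Real.log n) with ha
  set b := Real.log (1 / α) with hb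
  have haa : a₀ ≤ a :=
    Real.log_le_log (Real.log_pos (by norm_num)) (Real.log_le_log (by norm_num) hn')
  have hbb : b₀ ≤ b := Real.log_le_log (by positivity)
    (one_div_le_one_div_of_le hα.1 (by linarith [hβα.2]))
  have hab : a₀ * b₀ ≤ a * b := mul_le_mul haa hbb hb₀pos.le (ha₀pos.le.trans haa)
  have hLab : L ≤ C₁ * (a * b) := by
    refine (log_level_le hn hα.1).trans ?_
    have e1 : Real.log 3 ≤ Real.log 3 / (a₀ * b₀) * (a * b) := by
      rw [div_mul_eq_mul_div, le_div_iff₀ (by positivity)]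
      gcongr
    have e2 : a ≤ 1 / b₀ * (a * b) := by
      rw [div_mul_eq_mul_div, le_div_iff₀ hb₀pos]
      nlinarith
    have e3 : b ≤ 1 / a₀ * (a * b) := by
      rw [div_mul_eq_mul_div, le_div_iff₀ ha₀pos]
      nlinarith
    rw [hC₁, add_mul, add_mul]
    linarith
  have hβab : Real.log (1 / β) ≤ C₂ * (a * b) := by
    rw [hC₂, div_mul_eq_mul_div, le_div_iff₀ (by positivity)]
    gcongr
  have hK := card_Kset_le_two_mul_logb hn
  have hK1 : (1 : ℝ) ≤ ((Nat.log 2 (n / 2) + 1 : ℕ) : ℝ) := by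
    exact_mod_cast Nat.le_add_left 1 _
  have hL0 : 0 ≤ L := Real.log_nonneg ((one_le_div hα.1).mpr (by linarith [hα.2]))
  set δ := Real.sqrt (L / (2 * n)) with hδ
  set δ' := Real.sqrt (Real.log (1 / β) / (2 * n)) with hδ'
  have hδsmall : δ ≤ 0.247 := by
    rw [hδ, Real.sqrt_le_left (by norm_num), div_le_iff₀ (by positivity)]
    have := hsmall.trans (setIntegral_gaussDensity1_le_one _)
    rw [div_le_one hn0] at this
    nlinarith
  have hk_le : (2 : ℝ) ^ Nat.log 2 (n / 2) / n ≤ 1 / 2 := by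
    rw [div_le_div_iff₀ hn0 two_pos]
    have := Nat.pow_log_le_self 2 (x := n / 2) (by omega)
    exact_mod_cast (by omega : 2 ^ Nat.log 2 (n / 2) * 2 ≤ 1 * n)
  have hk_ge : (1 : ℝ) / 4 ≤ 2 ^ Nat.log 2 (n / 2) / n := by
    rw [div_le_div_iff₀ four_pos hn0]
    have := Nat.lt_pow_succ_log_self one_lt_two (n / 2)
    rw [pow_succ] at this
    exact_mod_cast (by omega : 1 * n ≤ 2 ^ Nat.log 2 (n / 2) * 4)
  have hδ0 : 0 ≤ δ := Real.sqrt_nonneg _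
  obtain ⟨t, ht, hnull⟩ := exists_gaussianReal_real_Iic_eq
    (s := 1 - (2 ^ Nat.log 2 (n / 2) / n - δ)) hT0 (by linarith) (le_trans (by linarith) hT)
  have := isProbabilityMeasure_mixMeasure1 (τ := τ) hε
  refine pi_compl_rejRegion1d_le hn hα (mixMeasure1 ε τ) ht.1 hδ0
    (Real.sqrt_nonneg _ : 0 ≤ δ') hnull ?_ ?_ ?_
  · rw [neg_two_mul_mul_sqrt_sq hn0 hL0, hL, ← Real.log_inv, Real.exp_log
      (inv_pos.mpr (div_pos (by linarith) hα.1)), inv_div]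
    exact div_le_div_of_nonneg_left hα.1.le (by linarith) hK
  · have hgap : δ + δ' ≤ ε * (τ * c) := by
      have h1 := sqrt_div_two_mul_le hn0 hL0 hC₁pos.le hLab
      have h2 := sqrt_div_two_mul_le hn0 hlβ.le hC₂pos.le hβab
      have h3 := hρ.trans hετ
      rw [div_mul_eq_mul_div, div_le_iff₀ hcpos] at h3
      linarith
    have hshift := mul_le_mul_of_nonneg_left
      (mul_gaussDensity1_le_gaussianReal_real_Iic_sub ht hτ hτM) hε.1.le
    rw [mixMeasure1_real_Iic hε]
    linarith
  · rw [neg_two_mul_mul_sqrt_sq hn0 hlβ.le, one_div, Real.log_inv, neg_neg, Real.exp_log hβ.1]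

end
end
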